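/- Completeness of useful sharing: if ufnorm(p) (equivalently, if p is a →und-normal program), then the term unf(p) is a fireball, i.e., either a value or an inert term; in other words, Useful Open CbNeed normal forms unfold to Open CbNeed normal terms. -/

import Mathlib

/-! ## Terms of the pure λ-calculus (named syntax) -/

inductive Term : Type
  | var : ℕ → Term
  | lam : ℕ → Term → Term
  | app : Term → Term → Term
  deriving DecidableEq

namespace Term

/-- Size of a term: |x| = 1, |λx.t| = |t|+1, |t u| = |t|+|u|+1. -/
def size : Term → ℕ
  | var _ => 1
  | lam _ t => size t + 1
  | app t u => size t + size u + 1

/-- Free variables of a term. -/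
def fv : Term → Finset ℕ
  | var x => {x}
  | lam x t => (fv t).erase x
  | app t u => fv t ∪ fv u

/-- Meta-level substitution t{x←u}. -/
def subst (x : ℕ) (u : Term) : Term → Term
  | var y => if y = x then u else var y
  | lam y t => if y = x then lam y t else lam y (subst x u t)
  | app t s => app (subst x u t) (subst x u s)

def isVarB : Term → Bool
  | var _ => true
  | _ => false

/-- Values are abstractions (variables are not values). -/
def IsValue (t : Term) : Prop := ∃ x u, t = lam x u

/-- Needed variables of a term. -/
def nv : Term → Finset ℕ
  | var x => {x}
  | lam _ _ => ∅
  | app t u => nv t ∪ nv u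

/-- Applied variables of a term. -/
def anv : Term → Finset ℕ
  | var _ => ∅
  | lam _ _ => ∅
  | app (var x) u => insert x (anv u)
  | app (lam y t) u => anv (lam y t) ∪ anv u
  | app (app t s) u => anv (app t s) ∪ anv u

/-- Unapplied variables of a term. -/
def unv : Term → Finset ℕ
  | var x => {x}
  | lam _ _ => ∅
  | app (var _) u => unv u
  | app (lam y t) u => unv (lam y t) ∪ unv u
  | app (app t s) u => unv (app t s) ∪ unv u

end Term

/-! ## Inert terms and fireballs: i ::= x | i f,  f ::= v | i -/

mutual
  inductive Term.Inert : Term → Prop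
    | var (x : ℕ) : Term.Inert (Term.var x)
    | app {i f : Term} : Term.Inert i → Term.Fireball f → Term.Inert (Term.app i f)
  inductive Term.Fireball : Term → Prop
    | val {x : ℕ} {t : Term} : Term.Fireball (Term.lam x t)
    | inert {i : Term} : Term.Inert i → Term.Fireball i
end

/-- Non-variable inert terms i⁺. -/
def Term.InertPlus (t : Term) : Prop := t.Inert ∧ ∀ x, t ≠ Term.var x

/-! ## β-reduction (closure of the root rule under arbitrary term contexts) -/

inductive Beta : Term → Term → Prop
  | beta (x : ℕ) (t u : Term) : Beta (Term.app (Term.lam x t) u) (Term.subst x u t)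
  | lam {t t' : Term} (x : ℕ) : Beta t t' → Beta (Term.lam x t) (Term.lam x t')
  | appL {t t' : Term} (u : Term) : Beta t t' → Beta (Term.app t u) (Term.app t' u)
  | appR {u u' : Term} (t : Term) : Beta u u' → Beta (Term.app t u) (Term.app t u')

/-- `iterRel R n a b`: an n-step R-reduction sequence from a to b. -/
def iterRel {α : Type} (R : α → α → Prop) : ℕ → α → α → Prop
  | 0 => Eq
  | n + 1 => fun a c => ∃ b, R a b ∧ iterRel R n b c

/-! ## Environments and programs -/

/-- Environments are finite lists of explicit substitutions, written
left-to-right, i.e. E[x←t] is `E ++ [(x, t)]`. -/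
abbrev Env := List (ℕ × Term)

def Env.dom (E : Env) : Finset ℕ := (E.map Prod.fst).toFinset

/-- Content of the leftmost explicit substitution on x. -/
def Env.lookupES : Env → ℕ → Option Term
  | [], _ => none
  | (y, t) :: E, x => if y = x then some t else Env.lookupES E x

structure Program where
  tm : Term
  env : Env

/-- p@[x←u] : appending an explicit substitution at the end of the environment. -/
def Program.appES (p : Program) (x : ℕ) (u : Term) : Program := ⟨p.tm, p.env ++ [(x, u)]⟩

/-- One step of the needed-variables computation along an explicit substitution. -/
def nvStep (V : Finset ℕ) (e : ℕ × Term) : Finset ℕ :=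
  if e.1 ∈ V then (V.erase e.1) ∪ Term.nv e.2 else V

/-- Needed variables of a program. -/
def Program.nv (p : Program) : Finset ℕ := p.env.foldl nvStep p.tm.nv

/-- One step of the applied-variables computation (carrying needed variables). -/
def anvStep : Finset ℕ × Finset ℕ → ℕ × Term → Finset ℕ × Finset ℕ
  | (N, A), (x, u) =>
    (nvStep N (x, u),
      if x ∈ N then
        match u with
        | Term.var y => if x ∈ A then (A.erase x) ∪ {y} else A.erase x
        | _ => (A.erase x) ∪ Term.anv u
      else A)

/-- Applied variables of a program. -/
def Program.anv (p : Program) : Finset ℕ :=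
  (p.env.foldl anvStep (p.tm.nv, p.tm.anv)).2

/-- One step of the unapplied-variables computation (carrying needed variables). -/
def unvStep : Finset ℕ × Finset ℕ → ℕ × Term → Finset ℕ × Finset ℕ
  | (N, U), (x, u) =>
    (nvStep N (x, u),
      if x ∈ U ∨ (x ∈ N ∧ u.isVarB = false) then (U.erase x) ∪ Term.unv u else U)

/-- Unapplied variables of a program. -/
def Program.unv (p : Program) : Finset ℕ :=
  (p.env.foldl unvStep (p.tm.nv, p.tm.unv)).2

/-- Unfolding of a program into a term: unf(t, ε) = t, unf(t, E[x←u]) = unf(t, E){x←u}. -/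
def Program.unf (p : Program) : Term :=
  p.env.foldl (fun s e => Term.subst e.1 e.2 s) p.tm

/-! ## Term contexts H ::= ⟨·⟩ | H t | i H (i inert, enforced by WF) -/

inductive HCtx : Type
  | hole : HCtx
  | appL : HCtx → Term → HCtx
  | appR : Term → HCtx → HCtx

namespace HCtx

/-- Well-formedness: in i H, the left part i must be an inert term. -/
def WF : HCtx → Prop
  | hole => True
  | appL H _ => WF H
  | appR i H => Term.Inert i ∧ WF H

def plug : HCtx → Term → Term
  | hole, t => t
  | appL H u, t => Term.app (plug H t) u
  | appR i H, t => Term.app i (plug H t)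

def nv : HCtx → Finset ℕ
  | hole => ∅
  | appL H _ => nv H
  | appR i H => Term.nv i ∪ nv H

def anv : HCtx → Finset ℕ
  | hole => ∅
  | appL H _ => anv H
  | appR i H => Term.anv i ∪ anv H

def unv : HCtx → Finset ℕ
  | hole => ∅
  | appL H _ => unv H
  | appR i H => Term.unv i ∪ unv H

end HCtx

/-- Applicative term contexts H@ ::= ⟨·⟩ t | H@ t | i H@. -/
inductive HCtx.IsApp : HCtx → Prop
  | base (t : Term) : HCtx.IsApp (HCtx.appL HCtx.hole t)
  | appL {H : HCtx} (t : Term) : HCtx.IsApp H → HCtx.IsApp (HCtx.appL H t)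
  | appR {H : HCtx} {i : Term} : Term.Inert i → HCtx.IsApp H → HCtx.IsApp (HCtx.appR i H)

/-! ## Program contexts: hole in the term part (tc) or inside an ES (ec) -/

inductive PCtx : Type
  | tc : HCtx → Env → PCtx
  | ec : Term → Env → ℕ → HCtx → Env → PCtx

namespace PCtx

/-- P@[x←u] : appending an explicit substitution at the end of the environment of P. -/
def appES : PCtx → ℕ → Term → PCtx
  | tc H E, x, u => tc H (E ++ [(x, u)])
  | ec t E1 y H E2, x, u => ec t E1 y H (E2 ++ [(x, u)])

/-- Plugging a term into a program context. -/
def plugT : PCtx → Term → Program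
  | tc H E, t => ⟨H.plug t, E⟩
  | ec u E1 x H E2, t => ⟨u, E1 ++ (x, H.plug t) :: E2⟩

/-- Plugging a program into a program context: the plugged environment is appended
right after the position of the hole. -/
def plugP : PCtx → Program → Program
  | tc H E, q => ⟨H.plug q.tm, q.env ++ E⟩
  | ec u E1 x H E2, q => ⟨u, E1 ++ (x, H.plug q.tm) :: (q.env ++ E2)⟩

/-- Variables bound by the environment of P. -/
def dom : PCtx → Finset ℕ
  | tc _ E => Env.dom E
  | ec _ E1 y _ E2 => insert y (Env.dom E1 ∪ Env.dom E2)

/-- P(x): content of the leftmost explicit substitution on x occurring after the hole. -/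
def lookup : PCtx → ℕ → Option Term
  | tc _ E, x => Env.lookupES E x
  | ec _ _ _ _ E2, x => Env.lookupES E2 x

/-- (P⟨x⟩)@[x←H] : plug the variable x in the hole of P and append the ES [x←H],
whose content H now contains the hole. -/
def hered (P : PCtx) (x : ℕ) (H : HCtx) : PCtx :=
  ec (P.plugT (Term.var x)).tm (P.plugT (Term.var x)).env x H []

end PCtx

/-! ## Open CbNeed evaluation contexts P ∈ E_V -/

inductive OEC : PCtx → Finset ℕ → Prop
  | ax {H : HCtx} : H.WF → OEC (PCtx.tc H []) H.nv
  | gc {P : PCtx} {V : Finset ℕ} {x : ℕ} (t : Term) :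
      OEC P V → x ∉ V → x ∉ P.dom → OEC (P.appES x t) V
  | inert {P : PCtx} {V : Finset ℕ} {x : ℕ} {i : Term} :
      OEC P V → x ∈ V → Term.Inert i → x ∉ P.dom →
      OEC (P.appES x i) ((V.erase x) ∪ i.nv)
  | her {P : PCtx} {V : Finset ℕ} {x : ℕ} {H : HCtx} :
      OEC P V → x ∉ V → x ∉ P.dom → H.WF →
      OEC (P.hered x H) (V ∪ H.nv)

/-! ## Open CbNeed reduction -/

inductive StepOM : Program → Program → Prop
  | mk {P : PCtx} {V : Finset ℕ} {x : ℕ} {t u : Term} :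
      OEC P V →
      StepOM (P.plugT (Term.app (Term.lam x t) u)) (P.plugP ⟨t, [(x, u)]⟩)

inductive StepOE : Program → Program → Prop
  | mk {P : PCtx} {V : Finset ℕ} {x : ℕ} {v : Term} :
      OEC P V → P.lookup x = some v → v.IsValue →
      StepOE (P.plugT (Term.var x)) (P.plugT v)

def StepOnd (p q : Program) : Prop := StepOM p q ∨ StepOE p q

/-! ## Open CbNeed normal programs -/

inductive PInert : Program → Prop
  | ax {i : Term} : i.Inert → PInert ⟨i, []⟩
  | inert {p : Program} {x : ℕ} {i : Term} :
      PInert p → x ∈ p.nv → i.Inert → PInert (p.appES x i)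
  | gc {p : Program} {x : ℕ} (t : Term) :
      PInert p → x ∉ p.nv → PInert (p.appES x t)

inductive PAbs : Program → Prop
  | ax {v : Term} : v.IsValue → PAbs ⟨v, []⟩
  | gc {p : Program} {x : ℕ} (t : Term) : PAbs p → PAbs (p.appES x t)

def ONorm (p : Program) : Prop := PInert p ∨ PAbs p

/-! ## Useful Open CbNeed: multiplicative and exponential evaluation contexts -/

def upd (S : Finset ℕ) (x y : ℕ) : Finset ℕ := if x ∈ S then (S.erase x) ∪ {y} else S

inductive MEC : PCtx → Finset ℕ → Finset ℕ → Prop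
  | ax {H : HCtx} : H.WF → MEC (PCtx.tc H []) H.unv H.anv
  | var {P : PCtx} {U A : Finset ℕ} {x y : ℕ} :
      MEC P U A → x ∈ U ∪ A → x ∉ P.dom →
      MEC (P.appES x (Term.var y)) (upd U x y) (upd A x y)
  | gc {P : PCtx} {U A : Finset ℕ} {x : ℕ} (t : Term) :
      MEC P U A → x ∉ U ∪ A → x ∉ P.dom → MEC (P.appES x t) U A
  | inert {P : PCtx} {U A : Finset ℕ} {x : ℕ} {i : Term} :
      MEC P U A → x ∈ U ∪ A → i.InertPlus → x ∉ P.dom →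
      MEC (P.appES x i) ((U.erase x) ∪ i.unv) ((A.erase x) ∪ i.anv)
  | val {P : PCtx} {U A : Finset ℕ} {x : ℕ} {v : Term} :
      MEC P U A → x ∈ U → x ∉ A → v.IsValue → x ∉ P.dom →
      MEC (P.appES x v) (U.erase x) A
  | her {P : PCtx} {U A : Finset ℕ} {x : ℕ} {H : HCtx} :
      MEC P U A → x ∉ U ∪ A → x ∉ P.dom → H.WF →
      MEC (P.hered x H) (U ∪ H.unv) (A ∪ H.anv)

/-- Exponential evaluation contexts P ∈ E@_{U,A}; the last (natural number) index
counts the number of applications of rule (e_NA) in the derivation. -/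
inductive EEC : PCtx → Finset ℕ → Finset ℕ → ℕ → Prop
  | ax1 {H : HCtx} : H.IsApp → EEC (PCtx.tc H []) H.unv H.anv 0
  | ax2 {P : PCtx} {U A : Finset ℕ} {x : ℕ} {H : HCtx} :
      MEC P U A → x ∉ U ∪ A → x ∉ P.dom → H.IsApp →
      EEC (P.hered x H) ((U.erase x) ∪ H.unv) (A ∪ H.anv) 0
  | var {P : PCtx} {U A : Finset ℕ} {k : ℕ} {x y : ℕ} :
      EEC P U A k → x ∈ U ∪ A → x ∉ P.dom →
      EEC (P.appES x (Term.var y)) (upd U x y) (upd A x y) k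
  | inert {P : PCtx} {U A : Finset ℕ} {k : ℕ} {x : ℕ} {i : Term} :
      EEC P U A k → x ∈ U ∪ A → i.InertPlus → x ∉ P.dom →
      EEC (P.appES x i) ((U.erase x) ∪ i.unv) ((A.erase x) ∪ i.anv) k
  | gc {P : PCtx} {U A : Finset ℕ} {k : ℕ} {x : ℕ} (t : Term) :
      EEC P U A k → x ∉ U ∪ A → x ∉ P.dom → EEC (P.appES x t) U A k
  | val {P : PCtx} {U A : Finset ℕ} {k : ℕ} {x : ℕ} {v : Term} :
      EEC P U A k → x ∈ U → x ∉ A → v.IsValue → x ∉ P.dom →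
      EEC (P.appES x v) (U.erase x) A k
  | na {P : PCtx} {U A : Finset ℕ} {k : ℕ} {x : ℕ} :
      EEC P U A k → x ∉ A → x ∉ P.dom →
      EEC (P.hered x HCtx.hole) (U.erase x) A (k + 1)

/-! ## Useful Open CbNeed reduction -/

inductive StepUM : Program → Program → Prop
  | mk {P : PCtx} {U A : Finset ℕ} {x : ℕ} {t u : Term} :
      MEC P U A →
      StepUM (P.plugT (Term.app (Term.lam x t) u)) (P.plugP ⟨t, [(x, u)]⟩)

inductive StepUE : Program → Program → Prop
  | mk {P : PCtx} {U A : Finset ℕ} {k : ℕ} {x : ℕ} {v : Term} :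
      EEC P U A k → P.lookup x = some v → v.IsValue →
      StepUE (P.plugT (Term.var x)) (P.plugT v)

def StepUnd (p q : Program) : Prop := StepUM p q ∨ StepUE p q

/-- Useful multiplicative steps whose evaluation context lies in Em_{U,A}. -/
def StepUMat (U A : Finset ℕ) (p q : Program) : Prop :=
  ∃ (P : PCtx) (x : ℕ) (t u : Term), MEC P U A ∧
    p = P.plugT (Term.app (Term.lam x t) u) ∧ q = P.plugP ⟨t, [(x, u)]⟩

/-- Useful exponential steps whose evaluation context lies in E@_{U,A}. -/
def StepUEat (U A : Finset ℕ) (p q : Program) : Prop :=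
  ∃ (P : PCtx) (k : ℕ) (x : ℕ) (v : Term), EEC P U A k ∧
    P.lookup x = some v ∧ v.IsValue ∧
    p = P.plugT (Term.var x) ∧ q = P.plugT v

/-! ## Useful normal-form predicates -/

inductive GenVar : ℕ → Program → Prop
  | ax (x : ℕ) : GenVar x ⟨Term.var x, []⟩
  | her {x : ℕ} {p : Program} (y : ℕ) : GenVar x p → GenVar y (p.appES x (Term.var y))
  | gc {x z : ℕ} {p : Program} (t : Term) : GenVar x p → z ≠ x → GenVar x (p.appES z t)

inductive UfAbs : Program → Prop
  | ax {v : Term} : v.IsValue → UfAbs ⟨v, []⟩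
  | gv {p : Program} {x : ℕ} {v : Term} : GenVar x p → v.IsValue → UfAbs (p.appES x v)
  | gc {p : Program} {x : ℕ} (t : Term) : UfAbs p → UfAbs (p.appES x t)

inductive UfInert : Program → Prop
  | ax {i : Term} : i.InertPlus → UfInert ⟨i, []⟩
  | gv {p : Program} {x : ℕ} {i : Term} : GenVar x p → i.InertPlus → UfInert (p.appES x i)
  | inert {p : Program} {x : ℕ} {i : Term} :
      UfInert p → x ∈ p.nv → i.Inert → UfInert (p.appES x i)
  | useless {p : Program} {x : ℕ} {v : Term} :
      UfInert p → x ∈ p.unv → x ∉ p.anv → v.IsValue → UfInert (p.appES x v)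
  | gc {p : Program} {x : ℕ} (t : Term) : UfInert p → x ∉ p.nv → UfInert (p.appES x t)

def UfNorm (p : Program) : Prop := UfInert p ∨ UfAbs p ∨ ∃ x, GenVar x p

/-! ## The size-exploding family -/

/-- t₁ := λx.λy. y x x  (x := 0, y := 1). -/
def t1 : Term := Term.lam 0 (Term.lam 1 (Term.app (Term.app (Term.var 1) (Term.var 0)) (Term.var 0)))

/-- λy. y x x. -/
def tbody : Term := Term.lam 1 (Term.app (Term.app (Term.var 1) (Term.var 0)) (Term.var 0))

/-- The family t_n (values for n ≥ 1; tfam 0 is a dummy). -/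
def tfam : ℕ → Term
  | 0 => t1
  | 1 => t1
  | n + 2 => Term.lam 0 (Term.app (tfam (n + 1)) tbody)

/-- I := λz.z. -/
def Idt : Term := Term.lam 2 (Term.var 2)

/-- The family u_n : u₀ = I, u_{n+1} = λy. y u_n u_n. -/
def ufam : ℕ → Term
  | 0 => Idt
  | n + 1 => Term.lam 1 (Term.app (Term.app (Term.var 1) (ufam n)) (ufam n))

theorem nv_subst_aux (x : ℕ) (u : Term) (z : ℕ) : ∀ t : Term, z ∈ (Term.subst x u t).nv →
    (z ∈ t.nv ∧ z ≠ x) ∨ (x ∈ t.nv ∧ z ∈ u.nv) := by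
  intro t
  induction t with
  | var y =>
    by_cases h : y = x
    · subst h; simp [Term.subst, Term.nv]
    · simp only [Term.subst, h, if_false, Term.nv, Finset.mem_singleton]
      rintro rfl; exact Or.inl ⟨rfl, h⟩
  | lam y t ih =>
    by_cases h : y = x <;> simp [Term.subst, Term.nv, h]
  | app a b iha ihb =>
    simp only [Term.subst, Term.nv, Finset.mem_union]
    tauto

theorem anv_app_mem (a b : Term) (z : ℕ) :
    z ∈ (Term.app a b).anv ↔ (a = Term.var z ∨ z ∈ a.anv) ∨ z ∈ b.anv := by
  cases a <;> simp [Term.anv, eq_comm]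

theorem subst_eq_var (x : ℕ) (u : Term) (z : ℕ) (t : Term) (h : Term.subst x u t = Term.var z) :
    (t = Term.var z ∧ z ≠ x) ∨ (t = Term.var x ∧ u = Term.var z) := by
  cases t with
  | var y =>
    by_cases hy : y = x
    · subst hy; simp [Term.subst] at h; simp [h]
    · simp [Term.subst, hy] at h; subst h; simp [hy]
  | lam y t => by_cases hy : y = x <;> simp [Term.subst, hy] at h
  | app a b => simp [Term.subst] at h

theorem anv_subst_aux (x : ℕ) (u : Term) (z : ℕ) : ∀ t : Term, z ∈ (Term.subst x u t).anv →
    (z ∈ t.anv ∧ z ≠ x) ∨ (x ∈ t.nv ∧ z ∈ u.anv) ∨ (x ∈ t.anv ∧ x ∈ t.nv ∧ u = Term.var z) := by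
  intro t
  induction t with
  | var y =>
    by_cases h : y = x
    · subst h; simp only [Term.subst, Term.nv, if_true, Finset.mem_singleton]
      intro h; exact Or.inr (Or.inl ⟨trivial, h⟩)
    · simp [Term.subst, h, Term.anv]
  | lam y t ih =>
    by_cases h : y = x <;> simp [Term.subst, Term.anv, h]
  | app a b iha ihb =>
    simp only [Term.subst, Term.nv, Finset.mem_union, anv_app_mem]
    rintro ((h | h) | h)
    · rcases subst_eq_var x u z a h with ⟨h1, h2⟩ | ⟨h1, h2⟩
      · exact Or.inl ⟨Or.inl (Or.inl h1), h2⟩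
      · subst h1; simp [Term.nv, h2]
    · rcases iha h with ⟨h1, h2⟩ | ⟨h1, h2⟩ | ⟨h1, h2, h3⟩
      · exact Or.inl ⟨Or.inl (Or.inr h1), h2⟩
      · exact Or.inr (Or.inl ⟨Or.inl h1, h2⟩)
      · exact Or.inr (Or.inr ⟨Or.inl (Or.inr h1), Or.inl h2, h3⟩)
    · rcases ihb h with ⟨h1, h2⟩ | ⟨h1, h2⟩ | ⟨h1, h2, h3⟩
      · exact Or.inl ⟨Or.inr h1, h2⟩
      · exact Or.inr (Or.inl ⟨Or.inr h1, h2⟩)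
      · exact Or.inr (Or.inr ⟨Or.inr h1, Or.inr h2, h3⟩)

theorem step_inv (t : Term) (N A : Finset ℕ) (x : ℕ) (u : Term)
    (hN : t.nv ⊆ N) (hA : t.anv ⊆ A) :
    (Term.subst x u t).nv ⊆ (anvStep (N, A) (x, u)).1 ∧
    (Term.subst x u t).anv ⊆ (anvStep (N, A) (x, u)).2 := by
  constructor
  · intro z hz
    have h := nv_subst_aux x u z t hz
    simp only [anvStep, nvStep]
    by_cases hx : x ∈ N
    · rw [if_pos hx]
      rcases h with ⟨h1, h2⟩ | ⟨h1, h2⟩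
      · simp [hN h1, h2]
      · simp [h2]
    · rw [if_neg hx]
      rcases h with ⟨h1, h2⟩ | ⟨h1, h2⟩
      · exact hN h1
      · exact absurd (hN h1) hx
  · intro z hz
    have h := anv_subst_aux x u z t hz
    simp only [anvStep]
    by_cases hx : x ∈ N
    · rw [if_pos hx]
      rcases h with ⟨h1, h2⟩ | ⟨h1, h2⟩ | ⟨h1, h2, h3⟩
      · have := hA h1
        cases u <;> simp
        · split_ifs <;> simp [this, h2]
        · simp [this, h2]
        · simp [this, h2]
      · cases u
        · simp [Term.anv] at h2
        · simp [Term.anv] at h2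
        · simp [h2]
      · subst h3; simp [hA h1]
    · rw [if_neg hx]
      rcases h with ⟨h1, h2⟩ | ⟨h1, h2⟩ | ⟨h1, h2, h3⟩
      · exact hA h1
      · exact absurd (hN h1) hx
      · exact absurd (hN h2) hx

theorem fold_inv (E : Env) : ∀ (t : Term) (N A : Finset ℕ), t.nv ⊆ N → t.anv ⊆ A →
    (E.foldl (fun s e => Term.subst e.1 e.2 s) t).nv ⊆ E.foldl nvStep N ∧
    (E.foldl (fun s e => Term.subst e.1 e.2 s) t).anv ⊆ (E.foldl anvStep (N, A)).2 := by
  induction E with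
  | nil => intro t N A h1 h2; exact ⟨h1, h2⟩
  | cons e E ih =>
    intro t N A h1 h2
    have h := step_inv t N A e.1 e.2 h1 h2
    exact ih _ _ _ h.1 h.2

theorem prog_nv (p : Program) : p.unf.nv ⊆ p.nv :=
  (fold_inv p.env p.tm _ _ (Finset.Subset.refl _) (Finset.Subset.refl p.tm.anv)).1

theorem prog_anv (p : Program) : p.unf.anv ⊆ p.anv :=
  (fold_inv p.env p.tm _ _ (Finset.Subset.refl _) (Finset.Subset.refl _)).2

theorem unf_appES (p : Program) (x : ℕ) (u : Term) :
    (p.appES x u).unf = Term.subst x u p.unf := by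
  simp [Program.appES, Program.unf, List.foldl_append]

theorem genVar_unf {x : ℕ} {p : Program} (h : GenVar x p) : p.unf = Term.var x := by
  induction h with
  | ax x => rfl
  | her y _ ih => rw [unf_appES, ih]; simp [Term.subst]
  | gc t _ hne ih => rw [unf_appES, ih]; simp [Term.subst, hne.symm]

theorem subst_isValue (x : ℕ) (u t : Term) (h : t.IsValue) : (Term.subst x u t).IsValue := by
  obtain ⟨y, s, rfl⟩ := h
  by_cases hy : y = x <;> simp [Term.subst, hy, Term.IsValue]

theorem fireball_of_value {t : Term} (h : t.IsValue) : t.Fireball := by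
  obtain ⟨y, s, rfl⟩ := h; exact Term.Fireball.val

theorem ufAbs_unf {p : Program} (h : UfAbs p) : p.unf.IsValue := by
  induction h with
  | ax h => exact h
  | gv h hv => rw [unf_appES, genVar_unf h]; simpa [Term.subst] using hv
  | gc t _ ih => rw [unf_appES]; exact subst_isValue _ _ _ ih

theorem inert_app_iff (a b : Term) : (Term.app a b).Inert ↔ a.Inert ∧ b.Fireball :=
  ⟨fun h => by cases h with | app h1 h2 => exact ⟨h1, h2⟩, fun h => .app h.1 h.2⟩

theorem fireball_iff (t : Term) : t.Fireball ↔ t.IsValue ∨ t.Inert :=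
  ⟨fun h => by
    cases h with
    | val => exact Or.inl ⟨_, _, rfl⟩
    | inert h => exact Or.inr h,
   fun h => h.elim fireball_of_value .inert⟩

theorem fireball_subst {x : ℕ} {u t : Term} (hf : t.Fireball)
    (h : t.Inert → (Term.subst x u t).Fireball) : (Term.subst x u t).Fireball := by
  rcases (fireball_iff t).1 hf with h1 | h1
  · exact fireball_of_value (subst_isValue _ _ _ h1)
  · exact h h1

theorem inert_subst_inert (x : ℕ) (u : Term) (hu : u.Inert) :
    ∀ t : Term, t.Inert → (Term.subst x u t).Inert := by
  intro t
  induction t with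
  | var y => 
    intro _
    by_cases hy : y = x
    · simpa [Term.subst, hy] using hu
    · simpa [Term.subst, hy] using Term.Inert.var y
  | lam y t _ => intro h; cases h
  | app a b iha ihb =>
    intro h
    rw [inert_app_iff] at h
    exact .app (iha h.1) (fireball_subst h.2 fun hb => .inert (ihb hb))

theorem inert_subst_gc (x : ℕ) (u : Term) :
    ∀ t : Term, x ∉ t.nv → t.Inert → (Term.subst x u t).Inert := by
  intro t
  induction t with
  | var y => 
    intro h _
    have hy : y ≠ x := by rintro rfl; simp [Term.nv] at h
    simpa [Term.subst, hy] using Term.Inert.var y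
  | lam y t _ => intro _ h; cases h
  | app a b iha ihb =>
    intro hx h
    rw [inert_app_iff] at h
    simp only [Term.nv, Finset.mem_union, not_or] at hx
    exact .app (iha hx.1 h.1) (fireball_subst h.2 fun hb => .inert (ihb hx.2 hb))

theorem inert_subst_val (x : ℕ) (u : Term) (hu : u.IsValue) :
    ∀ t : Term, x ∉ t.anv → t.Inert →
      (Term.subst x u t).Inert ∨ t = Term.var x := by
  intro t
  induction t with
  | var y => 
    intro _ _
    by_cases hy : y = x
    · right; rw [hy]
    · left; simpa [Term.subst, hy] using Term.Inert.var y
  | lam y t _ => intro _ h; cases h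
  | app a b iha ihb =>
    intro hx h
    rw [inert_app_iff] at h
    simp only [anv_app_mem, not_or] at hx
    obtain ⟨⟨h1, h2⟩, h3⟩ := hx
    left
    refine .app ((iha h2 h.1).resolve_right h1) (fireball_subst h.2 fun hb => ?_)
    rcases ihb h3 hb with h4 | h4
    · exact .inert h4
    · subst h4; simpa [Term.subst] using fireball_of_value hu

theorem inertPlus_subst {x : ℕ} {u t : Term} (ht : t.InertPlus)
    (h : (Term.subst x u t).Inert) : (Term.subst x u t).InertPlus := by
  refine ⟨h, fun z hz => ?_⟩
  rcases subst_eq_var x u z t hz with h1 | h1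
  · exact ht.2 _ h1.1
  · exact ht.2 _ h1.1

theorem ufInert_unf {p : Program} (h : UfInert p) : p.unf.InertPlus := by
  induction h with
  | ax h => exact h
  | gv h hi => rw [unf_appES, genVar_unf h]; simpa [Term.subst] using hi
  | inert _ _ hi ih =>
    rw [unf_appES]; exact inertPlus_subst ih (inert_subst_inert _ _ hi _ ih.1)
  | useless _ _ ha hv ih =>
    rw [unf_appES]
    exact inertPlus_subst ih
      ((inert_subst_val _ _ hv _ (fun h => ha (prog_anv _ h)) ih.1).resolve_right (ih.2 _))
  | gc t _ hx ih =>
    rw [unf_appES]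
    exact inertPlus_subst ih (inert_subst_gc _ _ _ (fun h => hx (prog_nv _ h)) ih.1)

/-- completeness of useful sharing: useful normal forms unfold to
fireballs, i.e. to Open CbNeed normal terms. -/
theorem ufnorm_unfolds_to_fireball :
    ∀ p : Program, UfNorm p → Term.Fireball p.unf := by
  intro p h
  rcases h with h | h | ⟨x, h⟩
  · exact .inert (ufInert_unf h).1
  · exact fireball_of_value (ufAbs_unf h)
  · rw [genVar_unf h]; exact .inert (.var x)
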